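/- Let d ≥ 2. Then μ( G_{e_d}^+ ∩ G_{e_{d-1}}^- ) = μ( G_{e_d}^+ ∩ G_{e_{d-1}}^+ ) = 1/4, where G_n^± = { R ∈ SO(d) : ±⟪Rn, e_d⟫ > 0 }. -/

import Mathlib

noncomputable section
open MeasureTheory Real Filter
open scoped ENNReal RealInnerProductSpace

instance {m n : Type*} : MeasurableSpace (Matrix m n ℝ) := MeasurableSpace.pi

/-- The special orthogonal group `SO(d)` as matrices. -/
abbrev SOd (d : ℕ) := Matrix.specialOrthogonalGroup (Fin d) ℝ

/-- The last coordinate `⟪x, e_d⟫` of a vector `x ∈ ℝ^d`. -/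
def lastCoord {d : ℕ} (x : EuclideanSpace ℝ (Fin d)) : ℝ :=
  if h : 0 < d then x ⟨d - 1, Nat.sub_lt h Nat.one_pos⟩ else 0

/-- Action of a matrix on `ℝ^d` (Euclidean space) by matrix-vector multiplication. -/
def rotAct {d : ℕ} (R : Matrix (Fin d) (Fin d) ℝ) (x : EuclideanSpace ℝ (Fin d)) :
    EuclideanSpace ℝ (Fin d) :=
  (EuclideanSpace.equiv (Fin d) ℝ).symm (R.mulVec (EuclideanSpace.equiv (Fin d) ℝ x))

/-- Action of `R ∈ SO(d)` on `ℝ^d`. -/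
def rot {d : ℕ} (R : SOd d) (x : EuclideanSpace ℝ (Fin d)) : EuclideanSpace ℝ (Fin d) :=
  rotAct (R : Matrix (Fin d) (Fin d) ℝ) x

/-!
STATEMENT 12: the normalization ψ(π/2) = 1/4 from the proof of Lemma 3.2:
μ(G_{e_d}^+ ∩ G_{e_{d-1}}^-) = μ(G_{e_d}^+ ∩ G_{e_{d-1}}^+) = 1/4.
-/

open Matrix in
/-- Rotation by angle `t` in the `(i,j)` coordinate plane. -/
def planeRot {d : ℕ} (i j : Fin d) (t : ℝ) : Matrix (Fin d) (Fin d) ℝ :=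
  1 + (cos t - 1) • (Matrix.single i i (1:ℝ) + Matrix.single j j (1:ℝ))
    + sin t • (Matrix.single i j (1:ℝ) - Matrix.single j i (1:ℝ))

lemma planeRot_mul {d : ℕ} {i j : Fin d} (h : i ≠ j) (s t : ℝ) :
    planeRot i j s * planeRot i j t = planeRot i j (s + t) := by
  have h' := h.symm
  set P : Matrix (Fin d) (Fin d) ℝ := Matrix.single i i (1:ℝ) + Matrix.single j j (1:ℝ) with hP
  set K : Matrix (Fin d) (Fin d) ℝ := Matrix.single i j (1:ℝ) - Matrix.single j i (1:ℝ) with hK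
  have hPP : P * P = P := by
    simp [hP, mul_add, add_mul, h, h']
  have hPK : P * K = K := by
    simp [hP, hK, mul_add, add_mul, mul_sub, sub_mul, h, h']
    try abel
  have hKP : K * P = K := by
    simp [hP, hK, mul_add, add_mul, mul_sub, sub_mul, h, h']
    try abel
  have hKK : K * K = -P := by
    simp [hP, hK, mul_add, add_mul, mul_sub, sub_mul, h, h']
    try abel
  have e : ∀ t, planeRot i j t = 1 + (cos t - 1) • P + sin t • K := fun t => rfl
  rw [e, e, e, cos_add, sin_add]
  simp only [mul_add, add_mul, one_mul, mul_one, smul_mul_assoc, mul_smul_comm, hPP, hPK, hKP, hKK]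
  module

lemma planeRot_zero {d : ℕ} (i j : Fin d) : planeRot i j 0 = 1 := by
  simp [planeRot]

lemma planeRot_transpose {d : ℕ} (i j : Fin d) (t : ℝ) :
    (planeRot i j t).transpose = planeRot i j (-t) := by
  simp only [planeRot, Matrix.transpose_add, Matrix.transpose_sub, Matrix.transpose_smul,
    Matrix.transpose_single, Matrix.transpose_one, cos_neg, sin_neg]
  module

lemma planeRot_mem {d : ℕ} {i j : Fin d} (h : i ≠ j) (t : ℝ) :
    planeRot i j t ∈ Matrix.specialOrthogonalGroup (Fin d) ℝ := by
  rw [Matrix.mem_specialOrthogonalGroup_iff]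
  refine ⟨?_, ?_⟩
  · rw [Matrix.mem_orthogonalGroup_iff, planeRot_transpose, planeRot_mul h]
    simp [planeRot_zero]
  · have h1 : planeRot i j t = planeRot i j (t/2) * planeRot i j (t/2) := by
      rw [planeRot_mul h]; ring_nf
    have h2 : (planeRot i j (t/2)).transpose * planeRot i j (t/2) = 1 := by
      rw [planeRot_transpose, planeRot_mul h]
      simp [planeRot_zero]
    have h3 := congrArg Matrix.det h2
    rw [Matrix.det_mul, Matrix.det_transpose, Matrix.det_one] at h3
    rw [h1, Matrix.det_mul, h3]

lemma mul_planeRot_left {d : ℕ} {i j : Fin d} (h : i ≠ j) (t : ℝ)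
    (R : Matrix (Fin d) (Fin d) ℝ) (p : Fin d) :
    (R * planeRot i j t) p i = cos t * R p i - sin t * R p j := by
  simp [planeRot, mul_add, mul_sub, h, h.symm]
  ring

lemma mul_planeRot_right {d : ℕ} {i j : Fin d} (h : i ≠ j) (t : ℝ)
    (R : Matrix (Fin d) (Fin d) ℝ) (p : Fin d) :
    (R * planeRot i j t) p j = sin t * R p i + cos t * R p j := by
  simp [planeRot, mul_add, mul_sub, h, h.symm]
  ring

lemma measurable_entry {d : ℕ} (p i : Fin d) :
    Measurable (fun R : SOd d => (R : Matrix (Fin d) (Fin d) ℝ) p i) :=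
  (measurable_pi_apply i).comp ((measurable_pi_apply p).comp measurable_subtype_coe)

lemma measurable_rmul {d : ℕ} (R₀ : SOd d) : Measurable (fun R : SOd d => R * R₀) := by
  refine Measurable.subtype_mk ?_
  refine measurable_pi_lambda _ fun p => measurable_pi_lambda _ fun i => ?_
  simp only [Submonoid.coe_mul, Matrix.mul_apply]
  exact Finset.measurable_sum _ fun k _ => (measurable_entry p k).mul_const _

lemma null_plane {d : ℕ} (μ : Measure (SOd d)) [IsProbabilityMeasure μ]
    (hμright : ∀ R₀ : SOd d, μ.map (fun R => R * R₀) = μ) (p : Fin d) {i j : Fin d} (h : i ≠ j) :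
    μ {R : SOd d | R.1 p i = 0 ∧ R.1 p j ≠ 0} = 0 := by
  set S : Set (SOd d) := {R : SOd d | R.1 p i = 0 ∧ R.1 p j ≠ 0} with hS
  have hSm : MeasurableSet S :=
    (measurable_entry p i (measurableSet_singleton 0)).inter
      (measurable_entry p j (measurableSet_singleton 0)).compl
  let t : ℕ → ℝ := fun n => 1 / ((n:ℝ) + 1)
  have ht0 : ∀ n, 0 < t n := fun n => by positivity
  have ht1 : ∀ n, t n ≤ 1 := fun n => by
    simp only [t]; rw [div_le_one (by positivity)]; linarith [Nat.cast_nonneg (α := ℝ) n]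
  have htinj : ∀ m n, m ≠ n → t m ≠ t n := by
    intro m n hmn he
    simp only [t, one_div, inv_inj, add_left_inj, Nat.cast_inj] at he
    exact hmn he
  let T : ℕ → Set (SOd d) := fun n =>
    (fun R : SOd d => R * ⟨planeRot i j (t n), planeRot_mem h _⟩) ⁻¹' S
  have hTm : ∀ n, MeasurableSet (T n) := fun n => measurable_rmul _ hSm
  have hTμ : ∀ n, μ (T n) = μ S := fun n => by
    conv_rhs => rw [← hμright ⟨planeRot i j (t n), planeRot_mem h _⟩]
    rw [Measure.map_apply (measurable_rmul _) hSm]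
  have hdisj : Pairwise (Function.onFun Disjoint T) := by
    intro m n hmn
    refine Set.disjoint_left.mpr ?_
    rintro R ⟨h1, h2⟩ ⟨h3, h4⟩
    simp only [Submonoid.coe_mul, mul_planeRot_left h, mul_planeRot_right h] at h1 h2 h3 h4
    have hsin : sin (t m - t n) ≠ 0 := by
      intro h0
      have hpi := pi_gt_three
      rw [sin_eq_zero_iff_of_lt_of_lt (by linarith [ht0 m, ht1 n]) (by linarith [ht0 n, ht1 m])] at h0
      exact htinj m n hmn (sub_eq_zero.mp h0)
    rw [sin_sub] at hsin
    have hb : R.1 p j = 0 := by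
      refine (mul_eq_zero.mp (?_ : (sin (t m) * cos (t n) - cos (t m) * sin (t n)) * R.1 p j = 0)).resolve_left hsin
      linear_combination cos (t m) * h3 - cos (t n) * h1
    have ha : R.1 p i = 0 := by
      refine (mul_eq_zero.mp (?_ : (sin (t m) * cos (t n) - cos (t m) * sin (t n)) * R.1 p i = 0)).resolve_left hsin
      linear_combination sin (t m) * h3 - sin (t n) * h1
    apply h2
    rw [ha, hb]; ring
  by_contra hne
  have hU := measure_iUnion (μ := μ) hdisj hTm
  simp only [hTμ, ENNReal.tsum_const_eq_top_of_ne_zero hne] at hU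
  exact measure_ne_top μ _ hU

lemma null_entry {d : ℕ} (μ : Measure (SOd d)) [IsProbabilityMeasure μ]
    (hμright : ∀ R₀ : SOd d, μ.map (fun R => R * R₀) = μ) (p i : Fin d) :
    ∀ᵐ R : SOd d ∂μ, R.1 p i ≠ 0 := by
  have h1 : ∀ᵐ R : SOd d ∂μ, ∀ j, i ≠ j → ¬ (R.1 p i = 0 ∧ R.1 p j ≠ 0) := by
    rw [ae_all_iff]
    intro j
    by_cases h : i = j
    · simp [h]
    · have := null_plane μ hμright p h
      have h2 : ∀ᵐ R : SOd d ∂μ, ¬ (R.1 p i = 0 ∧ R.1 p j ≠ 0) := by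
        rw [ae_iff]; simpa using this
      filter_upwards [h2] with R hR _ using hR
  filter_upwards [h1] with R hR h0
  have hz : ∀ j, R.1 p j = 0 := by
    intro j
    by_cases h : i = j
    · rw [← h, h0]
    · by_contra hj
      exact hR j h ⟨h0, hj⟩
  have hdet := (Matrix.mem_specialOrthogonalGroup_iff.mp R.2).2
  rw [Matrix.det_eq_zero_of_row_eq_zero p hz] at hdet
  exact zero_ne_one hdet

lemma lastCoord_rot {d : ℕ} (hd : 0 < d) (R : SOd d) (i : Fin d) :
    lastCoord (rot R (EuclideanSpace.single i (1:ℝ))) = R.1 ⟨d - 1, by omega⟩ i := by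
  have e : (EuclideanSpace.equiv (Fin d) ℝ) (EuclideanSpace.single i (1:ℝ)) = Pi.single i 1 := by
    ext k
    simp [EuclideanSpace.equiv, Pi.single_apply]
  simp [lastCoord, rot, rotAct, hd, e]

theorem haar_measure_quarter
    (d : ℕ) (hd : 2 ≤ d)
    (μ : Measure (SOd d)) [IsProbabilityMeasure μ]
    (hμleft : ∀ R₀ : SOd d, μ.map (fun R => R₀ * R) = μ)
    (hμright : ∀ R₀ : SOd d, μ.map (fun R => R * R₀) = μ) :
    μ {R : SOd d |
        0 < lastCoord (rot R (EuclideanSpace.single (⟨d - 1, by omega⟩ : Fin d) (1 : ℝ))) ∧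
        lastCoord (rot R (EuclideanSpace.single (⟨d - 2, by omega⟩ : Fin d) (1 : ℝ))) < 0} =
      1 / 4 ∧
    μ {R : SOd d |
        0 < lastCoord (rot R (EuclideanSpace.single (⟨d - 1, by omega⟩ : Fin d) (1 : ℝ))) ∧
        0 < lastCoord (rot R (EuclideanSpace.single (⟨d - 2, by omega⟩ : Fin d) (1 : ℝ)))} =
      1 / 4 := by
  have hd0 : 0 < d := by omega
  simp only [lastCoord_rot hd0]
  generalize hp : (⟨d - 1, by omega⟩ : Fin d) = p
  generalize hq : (⟨d - 2, by omega⟩ : Fin d) = q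
  have hpq : p ≠ q := by
    rw [← hp, ← hq]; simp only [ne_eq, Fin.mk.injEq]; omega
  have ma := measurable_entry p p
  have mb := measurable_entry p q
  have ap : MeasurableSet {R : SOd d | 0 < R.1 p p} := measurableSet_lt measurable_const ma
  have an : MeasurableSet {R : SOd d | R.1 p p < 0} := measurableSet_lt ma measurable_const
  have bp : MeasurableSet {R : SOd d | 0 < R.1 p q} := measurableSet_lt measurable_const mb
  have bn : MeasurableSet {R : SOd d | R.1 p q < 0} := measurableSet_lt mb measurable_const
  set Q1 : Set (SOd d) := {R | 0 < R.1 p p ∧ 0 < R.1 p q} with hQ1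
  set Q2 : Set (SOd d) := {R | 0 < R.1 p p ∧ R.1 p q < 0} with hQ2
  set Q3 : Set (SOd d) := {R | R.1 p p < 0 ∧ R.1 p q < 0} with hQ3
  set Q4 : Set (SOd d) := {R | R.1 p p < 0 ∧ 0 < R.1 p q} with hQ4
  have m1 : MeasurableSet Q1 := ap.inter bp
  have m2 : MeasurableSet Q2 := ap.inter bn
  have m3 : MeasurableSet Q3 := an.inter bn
  have m4 : MeasurableSet Q4 := an.inter bp
  have key : ∀ A B : Set (SOd d), MeasurableSet A →
      (fun R : SOd d => R * ⟨planeRot p q (π / 2), planeRot_mem hpq _⟩) ⁻¹' A = B →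
      μ B = μ A := by
    intro A B hA hAB
    conv_rhs => rw [← hμright ⟨planeRot p q (π / 2), planeRot_mem hpq _⟩]
    rw [Measure.map_apply (measurable_rmul _) hA, hAB]
  have e12 : μ Q2 = μ Q1 := by
    refine key _ _ m1 ?_
    ext R
    simp [hQ1, hQ2, mul_planeRot_left hpq, mul_planeRot_right hpq, and_comm]
  have e23 : μ Q3 = μ Q2 := by
    refine key _ _ m2 ?_
    ext R
    simp [hQ2, hQ3, mul_planeRot_left hpq, mul_planeRot_right hpq, and_comm]
  have e34 : μ Q4 = μ Q3 := by
    refine key _ _ m3 ?_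
    ext R
    simp [hQ4, hQ3, mul_planeRot_left hpq, mul_planeRot_right hpq, and_comm]
  have hall : μ (Q1 ∪ Q2 ∪ (Q3 ∪ Q4)) = 1 := by
    rw [← measure_univ (μ := μ)]
    refine measure_congr ?_
    filter_upwards [null_entry μ hμright p p, null_entry μ hμright p q] with R ha hb
    apply propext
    refine ⟨fun _ => trivial, fun _ => ?_⟩
    change ((0 < R.1 p p ∧ 0 < R.1 p q) ∨ (0 < R.1 p p ∧ R.1 p q < 0)) ∨
      ((R.1 p p < 0 ∧ R.1 p q < 0) ∨ (R.1 p p < 0 ∧ 0 < R.1 p q))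
    rcases lt_or_gt_of_ne ha with ha | ha <;> rcases lt_or_gt_of_ne hb with hb | hb <;> simp [ha, hb]
  rw [measure_union _ (m3.union m4), measure_union _ m2, measure_union _ m4, e34, e23, e12] at hall
  · have hq : μ Q1 = 1 / 4 := by
      rw [ENNReal.eq_div_iff (by norm_num) (by norm_num), ← hall]
      ring
    exact ⟨e12.trans hq, hq⟩
  · exact Set.disjoint_left.mpr fun R h h' => lt_asymm h.2 h'.2
  · exact Set.disjoint_left.mpr fun R h h' => lt_asymm h.2 h'.2
  · refine Set.disjoint_left.mpr ?_
    rintro R (h | h) (h' | h') <;> exact lt_asymm h.1 h'.1
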